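/- arXiv:2111.02056 — 3 statements merged into one kernel-verified Lean document; each statement's English description precedes it below -/
import Mathlib

section
/- Let S (states) and A (actions) be finite sets. Let π and π_b be policies, i.e., maps assigning to each s ∈ S a probability mass function π(·|s) resp. π_b(·|s) on A. Let ρ_π and ρ_{π_b} be probability mass functions on S (the state occupancy measures of π and π_b), and define the joint occupancy measures ρ_π(s,a) = ρ_π(s)·π(a|s) and ρ_{π_b}(s,a) = ρ_{π_b}(s)·π_b(a|s) on S × A. Then D_TV(ρ_π(s,a), ρ_{π_b}(s,a)) ≤ D_TV(ρ_π(s), ρ_{π_b}(s)) + Σ_{s∈S} ρ_{π_b}(s) · D_TV(π(·|s), π_b(·|s)). -/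
/-- **Proposition A.1.** For policies `π, π_b` on finite state space `S` and action
space `A`, with state occupancy measures `ρπ, ρπb` and joint occupancy measures
`ρπ(s,a) = ρπ(s)·π(a|s)`, `ρπb(s,a) = ρπb(s)·πb(a|s)`, the total variation distance
between the joints is bounded by the TV distance of the state marginals plus the
expected (under `ρπb`) TV distance of the policies. -/
theorem tv_occupancy_joint_le
    {S A : Type*} [Fintype S] [Fintype A]
    (π πb : S → A → ℝ) (ρπ ρπb : S → ℝ)
    (hπ : ∀ s a, 0 ≤ π s a) (hπsum : ∀ s, ∑ a, π s a = 1)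
    (hπb : ∀ s a, 0 ≤ πb s a) (hπbsum : ∀ s, ∑ a, πb s a = 1)
    (hρπ : ∀ s, 0 ≤ ρπ s) (hρπsum : ∑ s, ρπ s = 1)
    (hρπb : ∀ s, 0 ≤ ρπb s) (hρπbsum : ∑ s, ρπb s = 1) :
    (1/2) * ∑ z : S × A, |ρπ z.1 * π z.1 z.2 - ρπb z.1 * πb z.1 z.2|
      ≤ (1/2) * ∑ s, |ρπ s - ρπb s|
        + ∑ s, ρπb s * ((1/2) * ∑ a, |π s a - πb s a|) := by
  rw [Fintype.sum_prod_type, Finset.mul_sum, Finset.mul_sum, ← Finset.sum_add_distrib]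
  apply Finset.sum_le_sum
  intro s _
  have h : ∑ a, |ρπ s * π s a - ρπb s * πb s a|
      ≤ ∑ a, (|ρπ s - ρπb s| * π s a + ρπb s * |π s a - πb s a|) := by
    apply Finset.sum_le_sum
    intro a _
    have e : ρπ s * π s a - ρπb s * πb s a
        = (ρπ s - ρπb s) * π s a + ρπb s * (π s a - πb s a) := by ring
    rw [e]
    refine (abs_add_le _ _).trans (le_of_eq ?_)
    rw [abs_mul, abs_mul, abs_of_nonneg (hπ s a), abs_of_nonneg (hρπb s)]
  rw [Finset.sum_add_distrib, ← Finset.mul_sum, ← Finset.mul_sum, hπsum s] at h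
  linarith
end

section
/- Let S be a finite set and D ⊆ S a subset. Let ρ_π, ρ_{π_0}, ρ_{π_b} be probability mass functions on S, and let ρ̂ be a probability mass function on S supported on D (i.e., ρ̂(s) = 0 for all s ∉ D). Then D_TV(ρ_π, ρ_{π_b}) ≤ (1/2) Σ_{s∉D} ρ_{π_b}(s) + (1/2) Σ_{s∉D} |ρ_π(s) − ρ_{π_0}(s)| + (1/2) Σ_{s∉D} |ρ_{π_0}(s) − ρ_{π_b}(s)| + (1/2) Σ_{s∈D} |ρ_π(s) − ρ̂(s)| + D_TV(ρ̂, ρ_{π_b}). -/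
/-- **State-marginal decomposition (Eq. (12) in the proof of Theorem 1).**
For probability mass functions `ρπ, ρπ0, ρπb` on a finite set `S` and a
probability mass function `ρhat` supported on a subset `D ⊆ S`,
`D_TV(ρπ, ρπb)` is bounded by the sum of the out-of-data mass of `ρπb`, the
out-of-data discrepancies `|ρπ − ρπ0|` and `|ρπ0 − ρπb|`, the in-data
discrepancy `|ρπ − ρhat|`, and `D_TV(ρhat, ρπb)`. -/
theorem tv_state_marginal_decomposition
    {S : Type*} [Fintype S] [DecidableEq S] (D : Finset S)
    (ρπ ρπ0 ρπb ρhat : S → ℝ)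
    (hρπ : ∀ s, 0 ≤ ρπ s) (hρπsum : ∑ s, ρπ s = 1)
    (hρπ0 : ∀ s, 0 ≤ ρπ0 s) (hρπ0sum : ∑ s, ρπ0 s = 1)
    (hρπb : ∀ s, 0 ≤ ρπb s) (hρπbsum : ∑ s, ρπb s = 1)
    (hρhat : ∀ s, 0 ≤ ρhat s) (hρhatsum : ∑ s, ρhat s = 1)
    (hsupp : ∀ s ∉ D, ρhat s = 0) :
    (1/2) * ∑ s, |ρπ s - ρπb s|
      ≤ (1/2) * ∑ s ∈ Dᶜ, ρπb s
        + (1/2) * ∑ s ∈ Dᶜ, |ρπ s - ρπ0 s|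
        + (1/2) * ∑ s ∈ Dᶜ, |ρπ0 s - ρπb s|
        + (1/2) * ∑ s ∈ D, |ρπ s - ρhat s|
        + (1/2) * ∑ s, |ρhat s - ρπb s| := by
  have h1 := Finset.sum_add_sum_compl D (fun s => |ρπ s - ρπb s|)
  have h2 := Finset.sum_add_sum_compl D (fun s => |ρhat s - ρπb s|)
  have h3 : ∑ s ∈ D, |ρπ s - ρπb s|
      ≤ ∑ s ∈ D, |ρπ s - ρhat s| + ∑ s ∈ D, |ρhat s - ρπb s| := by
    rw [← Finset.sum_add_distrib]
    exact Finset.sum_le_sum fun s _ => abs_sub_le _ _ _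
  have h4 : ∑ s ∈ Dᶜ, |ρπ s - ρπb s|
      ≤ ∑ s ∈ Dᶜ, |ρπ s - ρπ0 s| + ∑ s ∈ Dᶜ, |ρπ0 s - ρπb s| := by
    rw [← Finset.sum_add_distrib]
    exact Finset.sum_le_sum fun s _ => abs_sub_le _ _ _
  have h5 : 0 ≤ ∑ s ∈ Dᶜ, ρπb s := Finset.sum_nonneg fun s _ => hρπb s
  have h6 : 0 ≤ ∑ s ∈ Dᶜ, |ρhat s - ρπb s| := Finset.sum_nonneg fun s _ => abs_nonneg _
  linarith
end

section
/- (Deterministic core of Theorem 1, performance bound of BC.) Let S and A be finite sets, and let D = {(s^1,a^1),…,(s^{|D|},a^{|D|})} be a finite dataset of state–action pairs, with 𝒮_D ⊆ S the set of states appearing in D. Let π be a deterministic policy (a map S → A) with state occupancy measure ρ_π and joint occupancy measure ρ_π(s,a) = ρ_π(s)·1[a = π(s)]; let π_b be a policy with state occupancy measure ρ_{π_b} and joint occupancy measure ρ_{π_b}(s,a) = ρ_{π_b}(s)·π_b(a|s); let ρ_{π_0} be a probability mass function on S (the state occupancy of the initial policy π_0); and let ρ_{π̂_b} be a probability mass function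 on S supported on 𝒮_D (the state occupancy of the empirical behavior policy). Let Π be the set of all deterministic policies, |Π| = |A|^{|S|}, and let δ > 0. Assume: (i) Σ_{s∈S} ρ_{π_b}(s) · D_TV(δ_{π(s)}, π_b(·|s)) ≤ (1/|D|) Σ_{i=1}^{|D|} 1[π(s^i) ≠ a^i] + sqrt( (log|Π| + log(2/δ)) / (2|D|) ), and (ii) D_TV(ρ_{π̂_b}, ρ_{π_b}) ≤ sqrt( (log|S| + log(2/δ)) / (2|D|) ). Then D_TV(ρ_π(s,a), ρ_{π_b}(s,a)) ≤ (1/2) Σ_{s∉𝒮_D} ρ_{π_b}(s) + (1/2) Σ_{s∉𝒮_D} |ρ_π(s) − ρ_{π_0}(s)| + (1/2) Σ_{s∉𝒮_D} |ρ_{π_0}(s) − ρ_{π_b}(s)| + (1/2) Σ_{s∈𝒮_D} |ρ_π(s) − ρ_{π̂_b}(s)| + (1/|D|) Σ_{i=1}^{|D|} 1[π(s^i) ≠ a^i] + sqrt( (log|S| + log(2/δ)) / (2|D|) ) + sqrt( (log|Π| + log(2/δ)) / (2|D|) ). -/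
/-- **Theorem 1 (Performance bound of BC), deterministic core.**
Given a dataset `data : Fin n → S × A` with state set `SD`, a deterministic
learned policy `π` with state occupancy `ρπ`, a behavior policy `πb` with
state occupancy `ρb`, an initial-policy state occupancy `ρ0`, and an empirical
behavior-policy state occupancy `ρhat` supported on `SD`, assuming the BC
generalization bound (i) and the empirical-occupancy concentration bound (ii),
the TV distance between the joint occupancy measures of `π` and `πb` is
bounded by the sum of the initialization gap, the BC gap and the data gap. -/
theorem bc_performance_bound
    {S A : Type*} [Fintype S] [Fintype A] [DecidableEq S] [DecidableEq A]
    (n : ℕ) (hn : 0 < n) (data : Fin n → S × A)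
    (SD : Finset S) (hSD : SD = Finset.image (fun i => (data i).1) Finset.univ)
    (π : S → A)
    (πb : S → A → ℝ) (hπb : ∀ s a, 0 ≤ πb s a) (hπbsum : ∀ s, ∑ a, πb s a = 1)
    (ρπ : S → ℝ) (hρπ : ∀ s, 0 ≤ ρπ s) (hρπsum : ∑ s, ρπ s = 1)
    (ρb : S → ℝ) (hρb : ∀ s, 0 ≤ ρb s) (hρbsum : ∑ s, ρb s = 1)
    (ρ0 : S → ℝ) (hρ0 : ∀ s, 0 ≤ ρ0 s) (hρ0sum : ∑ s, ρ0 s = 1)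
    (ρhat : S → ℝ) (hρhat : ∀ s, 0 ≤ ρhat s) (hρhatsum : ∑ s, ρhat s = 1)
    (hsupp : ∀ s ∉ SD, ρhat s = 0)
    (δ : ℝ) (hδ : 0 < δ)
    (hBC : ∑ s, ρb s * ((1/2) * ∑ a, |(if a = π s then (1:ℝ) else 0) - πb s a|)
        ≤ (1/n : ℝ) * ∑ i, (if π (data i).1 ≠ (data i).2 then (1:ℝ) else 0)
          + Real.sqrt
              ((Real.log ((Fintype.card A : ℝ) ^ Fintype.card S)
                + Real.log (2 / δ)) / (2 * n)))
    (hConc : (1/2) * ∑ s, |ρhat s - ρb s|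
        ≤ Real.sqrt ((Real.log (Fintype.card S) + Real.log (2 / δ)) / (2 * n))) :
    (1/2) * ∑ z : S × A,
        |ρπ z.1 * (if z.2 = π z.1 then (1:ℝ) else 0) - ρb z.1 * πb z.1 z.2|
      ≤ (1/2) * ∑ s ∈ SDᶜ, ρb s
        + (1/2) * ∑ s ∈ SDᶜ, |ρπ s - ρ0 s|
        + (1/2) * ∑ s ∈ SDᶜ, |ρ0 s - ρb s|
        + (1/2) * ∑ s ∈ SD, |ρπ s - ρhat s|
        + (1/n : ℝ) * ∑ i, (if π (data i).1 ≠ (data i).2 then (1:ℝ) else 0)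
        + Real.sqrt ((Real.log (Fintype.card S) + Real.log (2 / δ)) / (2 * n))
        + Real.sqrt
            ((Real.log ((Fintype.card A : ℝ) ^ Fintype.card S)
              + Real.log (2 / δ)) / (2 * n)) := by
  have h1 : ∑ z : S × A,
        |ρπ z.1 * (if z.2 = π z.1 then (1:ℝ) else 0) - ρb z.1 * πb z.1 z.2|
      ≤ ∑ s, |ρπ s - ρb s|
        + 2 * ∑ s, ρb s * ((1/2) * ∑ a, |(if a = π s then (1:ℝ) else 0) - πb s a|) := by
    rw [Fintype.sum_prod_type, Finset.mul_sum, ← Finset.sum_add_distrib]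
    refine Finset.sum_le_sum fun s _ => ?_
    have e : |ρπ s - ρb s|
        + 2 * (ρb s * ((1/2) * ∑ a, |(if a = π s then (1:ℝ) else 0) - πb s a|))
        = ∑ a, (|ρπ s - ρb s| * (if a = π s then (1:ℝ) else 0)
          + ρb s * |(if a = π s then (1:ℝ) else 0) - πb s a|) := by
      rw [Finset.sum_add_distrib, ← Finset.mul_sum, ← Finset.mul_sum]
      have : ∑ a, (if a = π s then (1:ℝ) else 0) = 1 := by simp
      rw [this]
      ring
    rw [e]
    refine Finset.sum_le_sum fun a _ => ?_
    have hI : (0:ℝ) ≤ (if a = π s then (1:ℝ) else 0) := by split_ifs <;> norm_num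
    dsimp only
    generalize (if a = π s then (1:ℝ) else 0) = I at hI ⊢
    calc |ρπ s * I - ρb s * πb s a| = |(ρπ s - ρb s) * I + ρb s * (I - πb s a)| := by
          congr 1; ring
      _ ≤ |(ρπ s - ρb s) * I| + |ρb s * (I - πb s a)| := abs_add_le _ _
      _ = _ := by rw [abs_mul, abs_mul, abs_of_nonneg hI, abs_of_nonneg (hρb s)]
  have h2 : ∑ s, |ρπ s - ρb s| = ∑ s ∈ SD, |ρπ s - ρb s| + ∑ s ∈ SDᶜ, |ρπ s - ρb s| :=
    (Finset.sum_add_sum_compl SD _).symm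
  have h3 : ∑ s ∈ SD, |ρπ s - ρb s|
      ≤ ∑ s ∈ SD, |ρπ s - ρhat s| + ∑ s ∈ SD, |ρhat s - ρb s| := by
    rw [← Finset.sum_add_distrib]
    exact Finset.sum_le_sum fun s _ => abs_sub_le _ _ _
  have h4 : ∑ s ∈ SDᶜ, |ρπ s - ρb s|
      ≤ ∑ s ∈ SDᶜ, |ρπ s - ρ0 s| + ∑ s ∈ SDᶜ, |ρ0 s - ρb s| := by
    rw [← Finset.sum_add_distrib]
    exact Finset.sum_le_sum fun s _ => abs_sub_le _ _ _
  have h5 : ∑ s ∈ SD, |ρhat s - ρb s| ≤ ∑ s, |ρhat s - ρb s| :=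
    Finset.sum_le_sum_of_subset_of_nonneg (Finset.subset_univ _) fun s _ _ => abs_nonneg _
  have h6 : 0 ≤ ∑ s ∈ SDᶜ, ρb s := Finset.sum_nonneg fun s _ => hρb s
  linarith
end
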